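/- For every compact Hausdorff space K, the π-weight of K is at most the spread of the square of K: π(K) ≤ s(K²). -/

import Mathlib

open Cardinal

/-- A π-base for a topological space: a family of nonempty open sets such that every
nonempty open set contains a member of the family. -/
def IsPiBase (K : Type) [TopologicalSpace K] (B : Set (Set K)) : Prop :=
  (∀ b ∈ B, IsOpen b ∧ b.Nonempty) ∧
    ∀ U : Set K, IsOpen U → U.Nonempty → ∃ b ∈ B, b ⊆ U

/-- The π-weight of a topological space: the least cardinality of a π-base. -/
noncomputable def piWeight (K : Type) [TopologicalSpace K] : Cardinal :=
  sInf {c : Cardinal | ∃ B : Set (Set K), IsPiBase K B ∧ c = #B}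

/-- The spread of a topological space: the supremum of the cardinalities of its
discrete subspaces. -/
noncomputable def spread (X : Type) [TopologicalSpace X] : Cardinal :=
  sSup {c : Cardinal | ∃ D : Set X,
    (∀ d ∈ D, ∃ U : Set X, IsOpen U ∧ U ∩ D = {d}) ∧ c = #D}

/-!
For infinite `K` put `κ = s(K²) ≥ ℵ₀`; a dense set of size at most `κ`, each point of which has
a local π-base of size at most `κ`, gives a π-base of size at most `κ`.

*Density.* If no set of size at most `κ` is dense, choose recursively, for `i < κ⁺`, points `x i`,
`y i` and an open `V i ∋ x i` with `y i ∉ closure (V i)`, such that `V i` misses all earlier `x j`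
and `y i` lies in the closure of every earlier `V j` containing `x i`. The open sets
`V i ×ˢ (closure (V i))ᶜ` then isolate the points `(x i, y i)` from one another in `K²`.

*Local π-bases.* If `p` has no local π-base of size at most `κ`, choose recursively, for `i < κ⁺`,
open sets `G i ∋ p` and `H i` with disjoint closures, such that `H i` meets every nonempty finite
intersection of earlier `G j` and `H j`. By compactness some `x i` lies in `closure (G j)` for all
`j ≤ i` and in `closure (H j)` for all `j > i`. The points `x i` form a free sequence, hence a
discrete subspace of size `κ⁺`.
-/

open Set Order Topology FiniteInter

universe u

section WellOrder

theorem exists_forall_restrict_Iio {I T : Type*} [Preorder I] [WellFoundedLT I]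
    {P : ∀ i : I, (Iio i → T) → T → Prop} (hP : ∀ i f, ∃ t, P i f t) :
    ∃ F : I → T, ∀ i, P i (fun j ↦ F j) (F i) := by
  choose next hnext using hP
  let F : I → T := wellFounded_lt.fix fun i f ↦ next i fun j ↦ f j j.2
  refine ⟨F, fun i ↦ ?_⟩
  have hF : F i = next i fun j ↦ F j := wellFounded_lt.fix_eq _ i
  exact hF ▸ hnext i _

theorem mk_Iio_toType_ord_succ_le {κ : Cardinal} (i : (succ κ).ord.ToType) : #(Iio i) ≤ κ := by
  have hlt : #(Iio i) < #(succ κ).ord.ToType := mk_Iio_lt i (by simp)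
  rwa [mk_ord_toType, lt_succ_iff] at hlt

end WellOrder

section FiniteIntersections

variable {X : Type u} {κ : Cardinal.{u}} {𝒜 : Set (Set X)}

theorem exists_finset_biInter_eq_of_mem_finiteInterClosure {W : Set X}
    (hW : W ∈ finiteInterClosure 𝒜) : ∃ s : Finset 𝒜, ⋂ A ∈ s, A.1 = W := by
  classical
  induction hW with
  | @basic A hA => exact ⟨{⟨A, hA⟩}, by simp⟩
  | univ => exact ⟨∅, by simp⟩
  | inter _ _ ihs iht =>
    obtain ⟨s, rfl⟩ := ihs
    obtain ⟨t, rfl⟩ := iht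
    exact ⟨s ∪ t, Finset.set_biInter_inter ..⟩

theorem mk_finset_le {α : Type u} (hκ : ℵ₀ ≤ κ) (hα : #α ≤ κ) : #(Finset α) ≤ κ := by
  classical
  exact (mk_le_of_surjective List.toFinset_surjective).trans
    ((mk_list_le_max α).trans (max_le hκ hα))

theorem mk_finiteInterClosure_le (hκ : ℵ₀ ≤ κ) (h𝒜 : #𝒜 ≤ κ) :
    #(finiteInterClosure 𝒜) ≤ κ := by
  have hsub : finiteInterClosure 𝒜 ⊆ range fun s : Finset 𝒜 ↦ ⋂ A ∈ s, A.1 :=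
    fun _ ↦ exists_finset_biInter_eq_of_mem_finiteInterClosure
  exact (mk_le_mk_of_subset hsub).trans (mk_range_le.trans (mk_finset_le hκ h𝒜))

theorem biInter_mem_finiteInterClosure {ι : Type*} (s : Finset ι) {A : ι → Set X}
    (hA : ∀ i ∈ s, A i ∈ finiteInterClosure 𝒜) : ⋂ i ∈ s, A i ∈ finiteInterClosure 𝒜 := by
  classical
  have hsub : ((s.image A : Finset (Set X)) : Set (Set X)) ⊆ finiteInterClosure 𝒜 := by
    simpa only [Finset.coe_image] using image_subset_iff.2 hA
  simpa using (finiteInterClosure_finiteInter 𝒜).finiteInter_mem (s.image A) hsub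

theorem exists_mk_le_forall_inter_nonempty (hκ : ℵ₀ ≤ κ) (h𝒜 : #𝒜 ≤ κ) :
    ∃ S : Set X, #S ≤ κ ∧ ∀ W ∈ finiteInterClosure 𝒜, W.Nonempty → (S ∩ W).Nonempty := by
  let 𝒲 : Set (Set X) := {W ∈ finiteInterClosure 𝒜 | W.Nonempty}
  have h𝒲 : #𝒲 ≤ κ := (mk_le_mk_of_subset (sep_subset _ _)).trans (mk_finiteInterClosure_le hκ h𝒜)
  choose point hpoint using fun W : 𝒲 ↦ W.2.2
  exact ⟨range point, mk_range_le.trans h𝒲,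
    fun W hW hne ↦ ⟨point ⟨W, hW, hne⟩, mem_range_self _, hpoint ⟨W, hW, hne⟩⟩⟩

end FiniteIntersections

section Regular

variable {X : Type*} [TopologicalSpace X] [RegularSpace X]

theorem exists_isOpen_mem_closure_subset {U : Set X} {p : X} (hU : IsOpen U) (hp : p ∈ U) :
    ∃ V, IsOpen V ∧ p ∈ V ∧ closure V ⊆ U := by
  obtain ⟨V, ⟨hpV, hV⟩, hVU⟩ := (hasBasis_opens_closure p).mem_iff.1 (hU.mem_nhds hp)
  exact ⟨V, hV, hpV, hVU⟩

theorem exists_isOpen_disjoint_closure {U : Set X} {p : X} (hU : IsOpen U) (hp : p ∈ U) :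
    ∃ G H, IsOpen G ∧ IsOpen H ∧ p ∈ G ∧ Uᶜ ⊆ H ∧ Disjoint (closure G) (closure H) := by
  obtain ⟨A, hA, hpA, hAU⟩ := exists_isOpen_mem_closure_subset hU hp
  obtain ⟨G, hG, hpG, hGA⟩ := exists_isOpen_mem_closure_subset hA hpA
  have hH : closure (closure A)ᶜ ⊆ Aᶜ :=
    closure_minimal (compl_subset_compl.2 subset_closure) hA.isClosed_compl
  exact ⟨G, (closure A)ᶜ, hG, isClosed_closure.isOpen_compl, hpG, compl_subset_compl.2 hAU,
    disjoint_compl_right.mono hGA hH⟩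

end Regular

section Spread

variable {X Y I : Type} [TopologicalSpace X] [TopologicalSpace Y]

theorem mk_le_spread_of_isolating {x : I → X} {N : I → Set X} (hN : ∀ i, IsOpen (N i))
    (hx : ∀ i, x i ∈ N i) (hne : ∀ i j, j ≠ i → x j ∉ N i) : #I ≤ spread X := by
  have hinj : Function.Injective x := fun i j hij ↦
    by_contra fun h ↦ hne j i h (hij ▸ hx j)
  have hisolated : ∀ d ∈ range x, ∃ U, IsOpen U ∧ U ∩ range x = {d} := by
    rintro _ ⟨i, rfl⟩
    refine ⟨N i, hN i, Subset.antisymm ?_ (singleton_subset_iff.2 ⟨hx i, mem_range_self i⟩)⟩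
    rintro _ ⟨hj, j, rfl⟩
    exact congrArg x (not_imp_not.1 (hne i j) hj)
  have hbdd : BddAbove {c : Cardinal | ∃ D : Set X,
      (∀ d ∈ D, ∃ U : Set X, IsOpen U ∧ U ∩ D = {d}) ∧ c = #D} := by
    refine ⟨#X, ?_⟩
    rintro _ ⟨D, -, rfl⟩
    exact mk_set_le D
  exact (mk_range_eq x hinj).symm.trans_le (le_csSup hbdd ⟨range x, hisolated, rfl⟩)

theorem spread_le_of_isEmbedding {f : X → Y} (hf : IsEmbedding f) : spread X ≤ spread Y := by
  refine csSup_le' ?_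
  rintro _ ⟨D, hD, rfl⟩
  have hV : ∀ d : D, ∃ V, IsOpen V ∧ f ⁻¹' V ∩ D = {d.1} := by
    intro d
    obtain ⟨U, hU, hUD⟩ := hD d d.2
    obtain ⟨V, hV, rfl⟩ := hf.isOpen_iff.1 hU
    exact ⟨V, hV, hUD⟩
  choose V hV hVD using hV
  refine mk_le_spread_of_isolating (x := fun d : D ↦ f d) hV
    (fun d ↦ ((hVD d).ge rfl).1) fun d e hed he ↦ ?_
  exact hed (Subtype.ext ((hVD d).le ⟨he, e.2⟩))

variable (X) in
theorem spread_le_spread_prod_self : spread X ≤ spread (X × X) :=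
  spread_le_of_isEmbedding (isEmbedding_graph continuous_id)

variable (X) in
theorem mk_le_spread_of_discreteTopology [DiscreteTopology X] : #X ≤ spread X :=
  mk_le_spread_of_isolating (x := id) (fun x ↦ isOpen_discrete {x}) mem_singleton
    fun _ _ hne ↦ hne

variable (X) in
theorem aleph0_le_spread [T2Space X] [Infinite X] : ℵ₀ ≤ spread X := by
  obtain ⟨U, hinf, hopen, hdisj⟩ := exists_seq_infinite_isOpen_pairwise_disjoint X
  choose x hx using fun n ↦ (hinf n).nonempty
  rw [← mk_nat]
  exact mk_le_spread_of_isolating hopen hx fun m n hne hn ↦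
    (hdisj hne).notMem_of_mem_left (hx n) hn

end Spread

section Density

theorem exists_mem_closure_forall_mem_closure {X : Type*} [TopologicalSpace X] [CompactSpace X]
    {S : Set X} {𝒜 : Set (Set X)}
    (hS : ∀ W ∈ finiteInterClosure 𝒜, W.Nonempty → (S ∩ W).Nonempty) (x : X) :
    ∃ y ∈ closure S, ∀ A ∈ 𝒜, x ∈ A → y ∈ closure A := by
  obtain ⟨y, hyS, hy⟩ := (isClosed_closure (s := S)).isCompact.inter_iInter_nonempty
    (fun A : {A ∈ 𝒜 | x ∈ A} ↦ closure A.1) (fun _ ↦ isClosed_closure) fun u ↦ by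
      obtain ⟨z, hzS, hz⟩ := hS (⋂ A ∈ u, A.1)
        (biInter_mem_finiteInterClosure u fun A _ ↦ .basic A.2.1)
        ⟨x, mem_iInter₂.2 fun A _ ↦ A.2.2⟩
      exact ⟨z, subset_closure hzS, iInter₂_mono (fun _ _ ↦ subset_closure) hz⟩
  exact ⟨y, hyS, fun A hA hxA ↦ mem_iInter.1 hy ⟨A, hA, hxA⟩⟩

theorem exists_isolating_triple {X : Type u} [TopologicalSpace X] [CompactSpace X] [RegularSpace X]
    {κ : Cardinal.{u}} (hκ : ℵ₀ ≤ κ) (hdense : ∀ S : Set X, Dense S → κ < #S)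
    {P : Set X} {𝒜 : Set (Set X)} (hP : #P ≤ κ) (h𝒜 : #𝒜 ≤ κ) :
    ∃ (x y : X) (V : Set X), IsOpen V ∧ x ∈ V ∧ y ∉ closure V ∧ Disjoint P V ∧
      ∀ A ∈ 𝒜, x ∈ A → y ∈ closure A := by
  obtain ⟨S, hSκ, hS⟩ := exists_mk_le_forall_inter_nonempty hκ h𝒜
  have hcard : #(S ∪ P : Set X) ≤ κ := (mk_union_le _ _).trans (add_le_of_le hκ hSκ hP)
  obtain ⟨x, hx⟩ : ∃ x, x ∉ closure (S ∪ P) :=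
    not_forall.1 fun h ↦ (hdense _ h).not_ge hcard
  obtain ⟨V, hV, hxV, hVsub⟩ :=
    exists_isOpen_mem_closure_subset isClosed_closure.isOpen_compl hx
  obtain ⟨y, hyS, hy⟩ := exists_mem_closure_forall_mem_closure hS x
  refine ⟨x, y, V, hV, hxV, fun hyV ↦ hVsub hyV (closure_mono subset_union_left hyS), ?_, hy⟩
  exact disjoint_left.2 fun z hzP hzV ↦
    hVsub (subset_closure hzV) (subset_closure (Or.inr hzP))

theorem mk_le_spread_prod_self_of_forall_dense_lt {X I : Type} [TopologicalSpace X] [CompactSpace X]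
    [RegularSpace X] [LinearOrder I] [WellFoundedLT I] {κ : Cardinal} (hκ : ℵ₀ ≤ κ)
    (hI : ∀ i : I, #(Iio i) ≤ κ) (hdense : ∀ S : Set X, Dense S → κ < #S) :
    #I ≤ spread (X × X) := by
  have hstep (i : I) (f : Iio i → X × X × Set X) : ∃ t : X × X × Set X,
      IsOpen t.2.2 ∧ t.1 ∈ t.2.2 ∧ t.2.1 ∉ closure t.2.2 ∧
        Disjoint (range fun j ↦ (f j).1) t.2.2 ∧
          ∀ A ∈ range fun j ↦ (f j).2.2, t.1 ∈ A → t.2.1 ∈ closure A := by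
    obtain ⟨x, y, V, h⟩ := exists_isolating_triple hκ hdense
      (P := range fun j ↦ (f j).1) (𝒜 := range fun j ↦ (f j).2.2)
      (mk_range_le.trans (hI i)) (mk_range_le.trans (hI i))
    exact ⟨(x, y, V), h⟩
  obtain ⟨F, hF⟩ := exists_forall_restrict_Iio hstep
  choose hV hxV hyV hdisj hclosure using hF
  refine mk_le_spread_of_isolating (x := fun i ↦ ((F i).1, (F i).2.1))
    (fun i ↦ (hV i).prod isClosed_closure.isOpen_compl) (fun i ↦ ⟨hxV i, hyV i⟩) ?_
  rintro i j hne ⟨hxj, hyj⟩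
  rcases hne.lt_or_gt with hji | hij
  · exact (hdisj i).notMem_of_mem_left ⟨⟨j, hji⟩, rfl⟩ hxj
  · exact hyj (hclosure j _ ⟨⟨i, hij⟩, rfl⟩ hxj)

theorem exists_dense_mk_le {X : Type} [TopologicalSpace X] [CompactSpace X] [RegularSpace X]
    {κ : Cardinal} (hκ : ℵ₀ ≤ κ) (hspread : spread (X × X) ≤ κ) :
    ∃ S : Set X, Dense S ∧ #S ≤ κ := by
  by_contra! hdense
  have hle : #(succ κ).ord.ToType ≤ spread (X × X) :=
    mk_le_spread_prod_self_of_forall_dense_lt hκ mk_Iio_toType_ord_succ_le hdense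
  rw [mk_ord_toType, succ_le_iff] at hle
  exact hle.not_ge hspread

end Density

section FreeSequence

/-- A free sequence: a family of points, indexed by a linear order, in which the closure of every
initial segment is disjoint from the closure of the complementary final segment. Well-ordered free
sequences are a source of discrete subspaces. -/
def IsFreeSequence {X I : Type*} [TopologicalSpace X] [LinearOrder I] (x : I → X) : Prop :=
  ∀ i, Disjoint (closure (x '' Iio i)) (closure (x '' Ici i))

theorem IsFreeSequence.notMem_closure_image_Ioi {X I : Type*} [TopologicalSpace X] [LinearOrder I]
    [WellFoundedLT I] {x : I → X} (hx : IsFreeSequence x) (i : I) :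
    x i ∉ closure (x '' Ioi i) := by
  let : SuccOrder I := .ofLinearWellFoundedLT I
  by_cases hi : IsMax i
  · simp [hi.Ioi_eq]
  · rw [← Ici_succ_of_not_isMax hi]
    exact (hx (succ i)).notMem_of_mem_left
      (subset_closure (mem_image_of_mem x (lt_succ_of_not_isMax hi)))

theorem IsFreeSequence.mk_le_spread {X I : Type} [TopologicalSpace X] [LinearOrder I]
    [WellFoundedLT I] {x : I → X} (hx : IsFreeSequence x) : #I ≤ spread X := by
  refine mk_le_spread_of_isolating (x := x)
    (N := fun i ↦ (closure (x '' Iio i) ∪ closure (x '' Ioi i))ᶜ)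
    (fun i ↦ (isClosed_closure.union isClosed_closure).isOpen_compl) (fun i ↦ ?_) ?_
  · have hleft : x i ∉ closure (x '' Iio i) :=
      (hx i).notMem_of_mem_right (subset_closure (mem_image_of_mem x self_mem_Ici))
    exact not_or.2 ⟨hleft, hx.notMem_closure_image_Ioi i⟩
  · rintro i j hne hj
    exact hj (hne.lt_or_gt.imp (fun h ↦ subset_closure (mem_image_of_mem x h))
      fun h ↦ subset_closure (mem_image_of_mem x h))

theorem exists_isFreeSequence {X I : Type*} [TopologicalSpace X] [CompactSpace X] [LinearOrder I]
    {G H : I → Set X} (hGH : ∀ i, Disjoint (closure (G i)) (closure (H i)))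
    (hfin : ∀ a b : Finset I, (∀ j ∈ a, ∀ k ∈ b, j < k) →
      ((⋂ j ∈ a, G j) ∩ ⋂ k ∈ b, H k).Nonempty) :
    ∃ x : I → X, IsFreeSequence x := by
  have hcut : ∀ i, (⋂ j, closure (if j ≤ i then G j else H j)).Nonempty := by
    refine fun i ↦ CompactSpace.iInter_nonempty (fun _ ↦ isClosed_closure) fun u ↦ ?_
    obtain ⟨z, hzG, hzH⟩ := hfin (u.filter (· ≤ i)) (u.filter (i < ·)) fun j hj k hk ↦
      (Finset.mem_filter.1 hj).2.trans_lt (Finset.mem_filter.1 hk).2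
    simp only [Finset.mem_filter, mem_iInter] at hzG hzH
    refine ⟨z, mem_iInter₂.2 fun j hj ↦ subset_closure ?_⟩
    split_ifs with hji
    exacts [hzG j ⟨hj, hji⟩, hzH j ⟨hj, not_le.1 hji⟩]
  choose x hx using hcut
  refine ⟨x, fun i ↦ (hGH i).symm.mono ?_ ?_⟩ <;> refine closure_minimal ?_ isClosed_closure
  · rintro _ ⟨j, hji : j < i, rfl⟩
    simpa [hji.not_ge] using mem_iInter.1 (hx j) i
  · rintro _ ⟨j, hij : i ≤ j, rfl⟩
    simpa [hij] using mem_iInter.1 (hx j) i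

end FreeSequence

section LocalPiBase

/-- A local π-base at `p`: a family of nonempty open sets, not required to contain `p`, such that
every open neighbourhood of `p` contains a member of the family. -/
def IsLocalPiBase {X : Type*} [TopologicalSpace X] (p : X) (B : Set (Set X)) : Prop :=
  (∀ b ∈ B, IsOpen b ∧ b.Nonempty) ∧ ∀ U, IsOpen U → p ∈ U → ∃ b ∈ B, b ⊆ U

theorem exists_disjoint_closure_forall_inter_nonempty {X : Type u} [TopologicalSpace X]
    [RegularSpace X] {κ : Cardinal.{u}} {p : X} (hp : ∀ B, IsLocalPiBase p B → κ < #B)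
    {ℬ : Set (Set X)} (hℬ : #ℬ ≤ κ) :
    ∃ G H, IsOpen G ∧ IsOpen H ∧ p ∈ G ∧ Disjoint (closure G) (closure H) ∧
      ∀ b ∈ ℬ, IsOpen b → b.Nonempty → (b ∩ H).Nonempty := by
  obtain ⟨U, hU, hpU, hbU⟩ : ∃ U, IsOpen U ∧ p ∈ U ∧
      ∀ b ∈ {b ∈ ℬ | IsOpen b ∧ b.Nonempty}, ¬ b ⊆ U := by
    by_contra! hbase
    exact (hp _ ⟨fun b hb ↦ hb.2, hbase⟩).not_ge ((mk_le_mk_of_subset (sep_subset _ _)).trans hℬ)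
  obtain ⟨G, H, hG, hH, hpG, hUH, hdisj⟩ := exists_isOpen_disjoint_closure hU hpU
  refine ⟨G, H, hG, hH, hpG, hdisj, fun b hb hopen hne ↦ ?_⟩
  exact (inter_compl_nonempty_iff.2 (hbU b ⟨hb, hopen, hne⟩)).mono (inter_subset_inter_right b hUH)

theorem biInter_inter_biInter_nonempty {X I : Type*} [TopologicalSpace X] [LinearOrder I]
    {G H : I → Set X} {p : X} (hG : ∀ i, IsOpen (G i)) (hH : ∀ i, IsOpen (H i))
    (hp : ∀ i, p ∈ G i)
    (hmeet : ∀ i, ∀ W ∈ finiteInterClosure (G '' Iio i ∪ H '' Iio i), IsOpen W → W.Nonempty →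
      (W ∩ H i).Nonempty)
    (a b : Finset I) (hab : ∀ j ∈ a, ∀ k ∈ b, j < k) :
    ((⋂ j ∈ a, G j) ∩ ⋂ k ∈ b, H k).Nonempty := by
  induction b using Finset.induction_on_max with
  | empty => exact ⟨p, by simp [hp]⟩
  | insert m b hm ih =>
    have ham : ∀ j ∈ a, j < m := fun j hj ↦ hab j hj m (Finset.mem_insert_self m b)
    have hne := ih fun j hj k hk ↦ hab j hj k (Finset.mem_insert_of_mem hk)
    have hopen : IsOpen ((⋂ j ∈ a, G j) ∩ ⋂ k ∈ b, H k) :=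
      (isOpen_biInter_finset fun j _ ↦ hG j).inter (isOpen_biInter_finset fun k _ ↦ hH k)
    have hmem : (⋂ j ∈ a, G j) ∩ ⋂ k ∈ b, H k ∈ finiteInterClosure (G '' Iio m ∪ H '' Iio m) :=
      .inter
        (biInter_mem_finiteInterClosure a fun j hj ↦ .basic (.inl (mem_image_of_mem G (ham j hj))))
        (biInter_mem_finiteInterClosure b fun k hk ↦ .basic (.inr (mem_image_of_mem H (hm k hk))))
    rw [Finset.set_biInter_insert, inter_comm (H m), ← inter_assoc]
    exact hmeet m _ hmem hopen hne

theorem mk_le_spread_of_forall_isLocalPiBase_lt {X I : Type} [TopologicalSpace X] [CompactSpace X]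
    [RegularSpace X] [LinearOrder I] [WellFoundedLT I] {κ : Cardinal} (hκ : ℵ₀ ≤ κ)
    (hI : ∀ i : I, #(Iio i) ≤ κ) {p : X} (hp : ∀ B, IsLocalPiBase p B → κ < #B) :
    #I ≤ spread X := by
  have hstep (i : I) (f : Iio i → Set X × Set X) : ∃ t : Set X × Set X,
      IsOpen t.1 ∧ IsOpen t.2 ∧ p ∈ t.1 ∧ Disjoint (closure t.1) (closure t.2) ∧
        ∀ W ∈ finiteInterClosure (range (fun j ↦ (f j).1) ∪ range fun j ↦ (f j).2),
          IsOpen W → W.Nonempty → (W ∩ t.2).Nonempty := by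
    have hcard : #(range (fun j ↦ (f j).1) ∪ range fun j ↦ (f j).2 : Set (Set X)) ≤ κ :=
      (mk_union_le _ _).trans
        (add_le_of_le hκ (mk_range_le.trans (hI i)) (mk_range_le.trans (hI i)))
    obtain ⟨G, H, h⟩ :=
      exists_disjoint_closure_forall_inter_nonempty hp (mk_finiteInterClosure_le hκ hcard)
    exact ⟨(G, H), h⟩
  obtain ⟨F, hF⟩ := exists_forall_restrict_Iio hstep
  choose hG hH hpG hdisj hmeet using hF
  obtain ⟨x, hx⟩ := exists_isFreeSequence hdisj
    (biInter_inter_biInter_nonempty hG hH hpG (by simpa only [image_eq_range] using hmeet))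
  exact hx.mk_le_spread

theorem exists_isLocalPiBase_mk_le {X : Type} [TopologicalSpace X] [CompactSpace X]
    [RegularSpace X] {κ : Cardinal} (hκ : ℵ₀ ≤ κ) (hspread : spread X ≤ κ) (p : X) :
    ∃ B, IsLocalPiBase p B ∧ #B ≤ κ := by
  by_contra! hp
  have hle : #(succ κ).ord.ToType ≤ spread X :=
    mk_le_spread_of_forall_isLocalPiBase_lt hκ mk_Iio_toType_ord_succ_le hp
  rw [mk_ord_toType, succ_le_iff] at hle
  exact hle.not_ge hspread

end LocalPiBase

section PiWeight

variable {X : Type} [TopologicalSpace X]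

theorem piWeight_le_mk_of_isPiBase {B : Set (Set X)} (hB : IsPiBase X B) : piWeight X ≤ #B :=
  csInf_le' ⟨B, hB, rfl⟩

theorem isPiBase_iUnion_of_dense {S : Set X} (hS : Dense S) {B : X → Set (Set X)}
    (hB : ∀ p ∈ S, IsLocalPiBase p (B p)) : IsPiBase X (⋃ p ∈ S, B p) := by
  refine ⟨fun b hb ↦ ?_, fun U hU hne ↦ ?_⟩
  · obtain ⟨p, hp, hbp⟩ := mem_iUnion₂.1 hb
    exact (hB p hp).1 b hbp
  · obtain ⟨p, hpU, hpS⟩ := hS.inter_open_nonempty U hU hne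
    obtain ⟨b, hb, hbU⟩ := (hB p hpS).2 U hU hpU
    exact ⟨b, mem_biUnion hpS hb, hbU⟩

theorem piWeight_le_of_dense {κ : Cardinal} (hκ : ℵ₀ ≤ κ) {S : Set X} (hS : Dense S)
    (hSκ : #S ≤ κ) (hlocal : ∀ p ∈ S, ∃ B, IsLocalPiBase p B ∧ #B ≤ κ) : piWeight X ≤ κ := by
  choose! B hB hBκ using hlocal
  calc piWeight X ≤ #(⋃ p ∈ S, B p) :=
        piWeight_le_mk_of_isPiBase (isPiBase_iUnion_of_dense hS hB)
    _ ≤ #S * ⨆ p : S, #(B p) := mk_biUnion_le B S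
    _ ≤ κ * κ := mul_le_mul' hSκ (ciSup_le' fun p ↦ hBκ p p.2)
    _ = κ := mul_eq_self hκ

variable (X) in
theorem piWeight_le_mk_of_discreteTopology [DiscreteTopology X] : piWeight X ≤ #X := by
  have hbase : IsPiBase X (range ({·})) := by
    refine ⟨?_, fun U _ ⟨x, hx⟩ ↦ ⟨{x}, mem_range_self x, singleton_subset_iff.2 hx⟩⟩
    rintro _ ⟨x, rfl⟩
    exact ⟨isOpen_discrete _, singleton_nonempty x⟩
  exact (piWeight_le_mk_of_isPiBase hbase).trans mk_range_le

end PiWeight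

/-- For every compact Hausdorff space `K`, `π(K) ≤ s(K²)`. -/
theorem piWeight_le_spread_sq (K : Type) [TopologicalSpace K] [CompactSpace K] [T2Space K] :
    piWeight K ≤ spread (K × K) := by
  have hspread : spread K ≤ spread (K × K) := spread_le_spread_prod_self K
  rcases finite_or_infinite K with _ | _
  · exact (piWeight_le_mk_of_discreteTopology K).trans
      ((mk_le_spread_of_discreteTopology K).trans hspread)
  · have hκ : ℵ₀ ≤ spread (K × K) := (aleph0_le_spread K).trans hspread
    obtain ⟨S, hS, hSκ⟩ := exists_dense_mk_le (X := K) hκ le_rfl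
    exact piWeight_le_of_dense hκ hS hSκ fun p _ ↦ exists_isLocalPiBase_mk_le hκ hspread p
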